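/- Let (M, d) be a nonempty proper metric space (every closed bounded subset is compact), let f : M → ℝ be continuous, let C ∈ ℝ, ε > 0, and let I be a positive integer. Assume: (i) there exists p ∈ M with f(p) > C; (ii) every finite subset F ⊆ M such that f(q) > C for all q ∈ F and d(q, q′) ≥ ε for all distinct q, q′ ∈ F has at most I elements. Then there exist an integer k with 1 ≤ k ≤ I and points q_1, …, q_k ∈ M such that: (a) d(q_i, q_j) ≥ ε for all i ≠ j; (b) f(q_i) > C for every i ∈ {1,…,k}; (c) f(q_1) ≥ f(x) for every x ∈ M, and for each i ∈ {2,…,k}, f(q_i) ≥ f(x) for every x ∈ M satisfying d(x, q_j) ≥ ε for all j < i; (d) f(x) ≤ C for every x ∈ M satisfying d(x, q_j) ≥ ε for all j ∈ {1,…,k}. In particular, f is bounded above on M. -/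

import Mathlib

/-!
Choose greedily: as long as `f > C` somewhere off the `ε`-balls around the points chosen so far,
add a maximum point of `f` off those balls. The chosen points are `ε`-separated and lie in
`{C < f}`, so at most `I` of them can ever be chosen, and a longest sequence of choices leaves
`f ≤ C` off the balls. The maxima exist because the packing bound also makes `{C < f}` bounded: a
maximal separated subset of it is finite, and the `ε`-balls around that subset cover it.
-/

open Set Metric
open scoped NNReal

theorem encard_le_of_forall_finset_card_le {α : Type*} {s : Set α} {N : ℕ}
    (h : ∀ F : Finset α, ↑F ⊆ s → F.card ≤ N) : s.encard ≤ N := by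
  by_contra! hlt
  obtain ⟨t, hts, ht⟩ := exists_subset_encard_eq (Order.add_one_le_of_lt hlt)
  lift t to Finset α using finite_of_encard_eq_coe (k := N + 1) (mod_cast ht)
  have hcard : t.card = N + 1 := by exact_mod_cast (encard_coe_eq_coe_finsetCard t).symm.trans ht
  have := h t hts
  omega

section Packing

variable {M : Type*} [PseudoMetricSpace M] {s : Set M}

theorem isBounded_of_packingNumber_ne_top {δ : ℝ≥0} (h : packingNumber δ s ≠ ⊤) :
    Bornology.IsBounded s := by
  have hfin : (maximalSeparatedSet δ s).Finite := by
    rwa [← encard_ne_top_iff, encard_maximalSeparatedSet h]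
  have hcover : s ⊆ ⋃ q ∈ maximalSeparatedSet δ s, closedBall q δ :=
    isCover_iff_subset_iUnion_closedBall.1 (isCover_maximalSeparatedSet h)
  exact ((Bornology.isBounded_biUnion hfin).2 fun _ _ => isBounded_closedBall).subset hcover

/-- `N` bounds the number of points of `s` at mutual distance at least `ε`. Unlike in
`Metric.packingNumber`, distance exactly `ε` is allowed. -/
def IsPackingBound (ε : ℝ) (s : Set M) (N : ℕ) : Prop :=
  ∀ F : Finset M, ↑F ⊆ s → (F : Set M).Pairwise (ε ≤ dist · ·) → F.card ≤ N

variable {ε : ℝ} {N : ℕ}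

theorem IsPackingBound.packingNumber_le (h : IsPackingBound ε s N) :
    packingNumber ε.toNNReal s ≤ N := by
  refine iSup₂_le fun P hPs => iSup_le fun hP => encard_le_of_forall_finset_card_le fun F hFP =>
    h F (hFP.trans hPs) fun q hq q' hq' hne => ?_
  have hlt : ENNReal.ofReal ε < edist q q' := hP (hFP hq) (hFP hq') hne
  rw [edist_dist] at hlt
  exact (ENNReal.ofReal_lt_ofReal_iff'.1 hlt).1.le

theorem IsPackingBound.isBounded (h : IsPackingBound ε s N) : Bornology.IsBounded s :=
  isBounded_of_packingNumber_ne_top (ne_top_of_le_ne_top (ENat.natCast_ne_top N) h.packingNumber_le)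

theorem IsPackingBound.card_le (h : IsPackingBound ε s N) (hε : 0 < ε) {ι : Type*} [Fintype ι]
    {q : ι → M} (hqs : ∀ i, q i ∈ s) (hq : Pairwise fun i j => ε ≤ dist (q i) (q j)) :
    Fintype.card ι ≤ N := by
  have hinj : Function.Injective q := fun i j hij => by
    by_contra hne
    exact (hq hne).not_gt (by rwa [hij, dist_self])
  have hrange : ↑(Finset.univ.map ⟨q, hinj⟩) = range q := by simp
  have hcard := h (Finset.univ.map ⟨q, hinj⟩) (hrange ▸ range_subset_iff.2 hqs)
    (hrange ▸ hq.range_pairwise)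
  rwa [Finset.card_map, Finset.card_univ] at hcard

end Packing

theorem exists_isMaxOn_of_forall_sdiff_le {X α : Type*} [TopologicalSpace X] [LinearOrder α]
    {f : X → α} {s K : Set X} {p : X} (hs : IsClosed s) (hK : IsCompact K)
    (hf : UpperSemicontinuousOn f (s ∩ K)) (hp : p ∈ s ∩ K) (hle : ∀ x ∈ s \ K, f x ≤ f p) :
    ∃ q ∈ s, IsMaxOn f s q := by
  obtain ⟨q, hq, hmax⟩ := hf.exists_isMaxOn ⟨p, hp⟩ (hK.inter_left hs)
  refine ⟨q, hq.1, fun x hx => ?_⟩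
  by_cases hxK : x ∈ K
  · exact hmax ⟨hx, hxK⟩
  · exact (hle x ⟨hx, hxK⟩).trans (hmax hp)

section SuccessiveMaxima

variable {M α : Type*} [PseudoMetricSpace M] [LinearOrder α] {f : M → α} {C : α} {ε : ℝ} {k : ℕ}
  {q : Fin k → M}

theorem notMem_thickening_iff {P : Set M} {x : M} :
    x ∉ thickening ε P ↔ ∀ p ∈ P, ε ≤ dist x p := by
  simp [mem_thickening_iff]

/-- The points `q 0, …, q (k - 1)` are successive maxima of `f` above the threshold `C` at scale
`ε`: each of them maximizes `f` off the open `ε`-balls around its predecessors, the union of these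
balls being the `ε`-thickening of the set of predecessors. -/
structure IsSuccessiveMaxima (f : M → α) (C : α) (ε : ℝ) (q : Fin k → M) : Prop where
  lt_apply : ∀ i, C < f (q i)
  notMem_thickening : ∀ i, q i ∉ thickening ε (q '' Iio i)
  isMaxOn : ∀ i, IsMaxOn f (thickening ε (q '' Iio i))ᶜ (q i)

namespace IsSuccessiveMaxima

theorem of_fin_zero (q : Fin 0 → M) : IsSuccessiveMaxima f C ε q :=
  ⟨fun i => i.elim0, fun i => i.elim0, fun i => i.elim0⟩

theorem pairwise_le_dist (hq : IsSuccessiveMaxima f C ε q) :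
    Pairwise fun i j => ε ≤ dist (q i) (q j) := by
  have hlt : ∀ i j, j < i → ε ≤ dist (q i) (q j) := fun i j hji =>
    notMem_thickening_iff.1 (hq.notMem_thickening i) _ (mem_image_of_mem q hji)
  intro i j hne
  rcases hne.lt_or_gt with hij | hji
  · exact dist_comm (q i) (q j) ▸ hlt j i hij
  · exact hlt i j hji

theorem apply_le (hq : IsSuccessiveMaxima f C ε q) {i : Fin k} {x : M}
    (hx : ∀ j < i, ε ≤ dist x (q j)) : f x ≤ f (q i) :=
  hq.isMaxOn i (notMem_thickening_iff.2 (forall_mem_image.2 hx))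

theorem snoc (hq : IsSuccessiveMaxima f C ε q) {y : M} (hy : C < f y)
    (hfar : y ∉ thickening ε (range q)) (hmax : IsMaxOn f (thickening ε (range q))ᶜ y) :
    IsSuccessiveMaxima f C ε (Fin.snoc q y : Fin (k + 1) → M) := by
  have himage_castSucc (i : Fin k) :
      (Fin.snoc q y : Fin (k + 1) → M) '' Iio i.castSucc = q '' Iio i := by
    rw [← Fin.image_castSucc_Iio, ← image_comp, Fin.snoc_comp_castSucc]
  have himage_last : (Fin.snoc q y : Fin (k + 1) → M) '' Iio (Fin.last k) = range q := by
    have hIio : Iio (Fin.last k) = range Fin.castSucc := by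
      ext i
      simp [Fin.lt_def]
    rw [hIio, ← range_comp, Fin.snoc_comp_castSucc]
  constructor <;> refine Fin.lastCases ?_ fun i => ?_
  · simpa only [Fin.snoc_last] using hy
  · simpa only [Fin.snoc_castSucc] using hq.lt_apply i
  · simpa only [Fin.snoc_last, himage_last] using hfar
  · simpa only [Fin.snoc_castSucc, himage_castSucc] using hq.notMem_thickening i
  · simpa only [Fin.snoc_last, himage_last] using hmax
  · simpa only [Fin.snoc_castSucc, himage_castSucc] using hq.isMaxOn i

theorem exists_snoc (hq : IsSuccessiveMaxima f C ε q) (hf : UpperSemicontinuous f)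
    (hK : IsCompact (closure {x | C < f x})) {x : M} (hx : x ∉ thickening ε (range q))
    (hxC : C < f x) : ∃ y, IsSuccessiveMaxima f C ε (Fin.snoc q y : Fin (k + 1) → M) := by
  obtain ⟨y, hfar, hmax⟩ := exists_isMaxOn_of_forall_sdiff_le
    isOpen_thickening.isClosed_compl hK (hf.upperSemicontinuousOn _) ⟨hx, subset_closure hxC⟩
    fun z hz => (not_lt.1 fun hzC => hz.2 (subset_closure hzC)).trans hxC.le
  exact ⟨y, hq.snoc (hxC.trans_le (hmax hx)) hfar hmax⟩

end IsSuccessiveMaxima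

theorem exists_isSuccessiveMaxima_superlevel_subset {N : ℕ} (hf : UpperSemicontinuous f)
    (hK : IsCompact (closure {x | C < f x})) (hε : 0 < ε)
    (hN : IsPackingBound ε {x | C < f x} N) :
    ∃ k ≤ N, ∃ q : Fin k → M,
      IsSuccessiveMaxima f C ε q ∧ {x | C < f x} ⊆ thickening ε (range q) := by
  have hbound : N ∈ upperBounds {k | ∃ q : Fin k → M, IsSuccessiveMaxima f C ε q} := by
    rintro k ⟨q, hq⟩
    simpa only [Fintype.card_fin] using hN.card_le hε hq.lt_apply hq.pairwise_le_dist
  obtain ⟨k, ⟨q, hq⟩, hlongest⟩ :=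
    BddAbove.exists_isGreatest_of_nonempty ⟨N, hbound⟩ ⟨0, Fin.elim0, .of_fin_zero _⟩
  refine ⟨k, hbound ⟨q, hq⟩, q, hq, fun x hxC => ?_⟩
  by_contra hx
  obtain ⟨y, hy⟩ := hq.exists_snoc hf hK hx hxC
  exact (hlongest ⟨_, hy⟩).not_gt k.lt_succ_self

end SuccessiveMaxima

theorem stmt_4_general {M α : Type*} [PseudoMetricSpace M] [ProperSpace M] [LinearOrder α]
    {f : M → α} (hf : UpperSemicontinuous f) {C : α} {ε : ℝ} (hε : 0 < ε) {I : ℕ}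
    (hexists : ∃ p : M, C < f p) (hsep : IsPackingBound ε {x | C < f x} I) :
    ∃ (k : ℕ) (q : Fin k → M), 1 ≤ k ∧ k ≤ I ∧
      (∀ i j : Fin k, i ≠ j → ε ≤ dist (q i) (q j)) ∧
      (∀ i : Fin k, C < f (q i)) ∧
      (∀ i : Fin k, ∀ x : M, (∀ j : Fin k, j < i → ε ≤ dist x (q j)) → f x ≤ f (q i)) ∧
      (∀ x : M, (∀ i : Fin k, ε ≤ dist x (q i)) → f x ≤ C) ∧
      (∃ B : α, ∀ x : M, f x ≤ B) := by
  obtain ⟨k, hkI, q, hq, hcover⟩ :=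
    exists_isSuccessiveMaxima_superlevel_subset hf hsep.isBounded.isCompact_closure hε hsep
  have hoff : ∀ x, (∀ i, ε ≤ dist x (q i)) → f x ≤ C := fun x hx =>
    not_lt.1 fun hxC => notMem_thickening_iff.2 (forall_mem_range.2 hx) (hcover hxC)
  have hk : 0 < k := by
    obtain ⟨p, hp⟩ := hexists
    refine Nat.pos_of_ne_zero ?_
    rintro rfl
    exact (hoff p fun i => i.elim0).not_gt hp
  have hfirst : ∀ x, f x ≤ f (q ⟨0, hk⟩) := fun x =>
    hq.apply_le fun j hj => absurd hj (Nat.not_lt_zero j)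
  exact ⟨k, q, hk, hkI, fun _ _ hij => hq.pairwise_le_dist hij, hq.lt_apply,
    fun _ _ hx => hq.apply_le hx, hoff, _, hfirst⟩

/-- Abstract metric-space content of Lemma 5.2 of the paper: on a nonempty proper
metric space, a continuous function `f` that exceeds the threshold `C` somewhere,
and such that any `ε`-separated finite set of points where `f > C` has at most `I`
elements, admits `k ≤ I` points of "successive maxima" with `f ≤ C` off the union
of the `ε`-balls around them; in particular `f` is bounded above. -/
theorem stmt_4 {M : Type*} [MetricSpace M] [ProperSpace M] [Nonempty M]
    (f : M → ℝ) (hf : Continuous f) (C ε : ℝ) (hε : 0 < ε) (I : ℕ) (hI : 1 ≤ I)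
    (hexists : ∃ p : M, C < f p)
    (hsep : ∀ F : Finset M, (∀ q ∈ F, C < f q) →
      (∀ q ∈ F, ∀ q' ∈ F, q ≠ q' → ε ≤ dist q q') → F.card ≤ I) :
    ∃ (k : ℕ) (q : Fin k → M), 1 ≤ k ∧ k ≤ I ∧
      (∀ i j : Fin k, i ≠ j → ε ≤ dist (q i) (q j)) ∧
      (∀ i : Fin k, C < f (q i)) ∧
      (∀ i : Fin k, ∀ x : M, (∀ j : Fin k, j < i → ε ≤ dist x (q j)) → f x ≤ f (q i)) ∧
      (∀ x : M, (∀ i : Fin k, ε ≤ dist x (q i)) → f x ≤ C) ∧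
      (∃ B : ℝ, ∀ x : M, f x ≤ B) := by
  exact stmt_4_general hf.upperSemicontinuous hε hexists hsep
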